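/- Let Ω = (0,h₁)×(0,h₂) with h₁,h₂ > 0 and Γ = {0}×[0,h₂] (one side of the rectangle). Then the sharp constant C₂(Ω,Γ) in the inequality ‖w‖_{L²(Γ)} ≤ C₂‖∇w‖_{L²(Ω)} for all w ∈ H̃¹(Ω,Γ) is equal to ((π/h₂)·tanh(π h₁/h₂))^{-1/2}. -/

import Mathlib

open MeasureTheory Real

/-!
Let `κ = π / h₂`. The trace has zero mean on `Γ`, so subtracting from `w` its mean over each segment
`{x} × (0, h₂)` keeps the trace and does not increase the Dirichlet energy. After this reduction
Wirtinger's inequality bounds `∫ (∂w/∂y)²` over each such segment below by `κ² ∫ w²`, and what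
remains is, for each fixed `y`, the one-dimensional inequality
`κ tanh (κ h₁) f(0)² ≤ ∫₀^h₁ (f'² + κ² f²)`. The latter comes from completing a square with the
solution `κ tanh` of a Riccati equation. So does Wirtinger's inequality for functions vanishing at
both endpoints, with `k tan` and `k ↑ κ`, from which the mean-zero case follows by duality.
All the estimates are equalities for `cos (κ y) cosh (κ (h₁ - x))`.
-/

open Set Function Filter Topology

section OneDimensional

variable {f f' : ℝ → ℝ} {a b k : ℝ}

-- Integrate `(f' + g f)² = f'² - c f² + (g f²)'`, which holds because `g' = c + g²`.
lemma mul_integral_sq_le_of_riccati {c : ℝ} {g : ℝ → ℝ} (hab : a ≤ b)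
    (hg : ∀ x ∈ Icc a b, HasDerivAt g (c + g x ^ 2) x) (hf : ContinuousOn f (Icc a b))
    (hff' : ∀ x ∈ Ioo a b, HasDerivAt f (f' x) x) (hf' : ContinuousOn f' (Icc a b)) :
    c * ∫ x in a..b, f x ^ 2 ≤
      (∫ x in a..b, f' x ^ 2) + (g b * f b ^ 2 - g a * f a ^ 2) := by
  have hgc : ContinuousOn g (Icc a b) := HasDerivAt.continuousOn hg
  have integrable {φ : ℝ → ℝ} (hφ : ContinuousOn φ (Icc a b)) :
      IntervalIntegrable φ volume a b := hφ.intervalIntegrable_of_Icc hab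
  have boundary_term : ∫ x in a..b, ((c + g x ^ 2) * f x ^ 2 + g x * (2 * f x * f' x)) =
      g b * f b ^ 2 - g a * f a ^ 2 := by
    refine intervalIntegral.integral_eq_sub_of_hasDerivAt_of_le (f := fun x ↦ g x * f x ^ 2) hab
      (by fun_prop) (fun x hx ↦ ?_) (integrable (by fun_prop))
    exact ((hg x (Ioo_subset_Icc_self hx)).mul ((hff' x hx).pow 2)).congr_deriv (by simp)
  have square_nonneg : 0 ≤ ∫ x in a..b, (f' x ^ 2 - c * f x ^ 2 +
      ((c + g x ^ 2) * f x ^ 2 + g x * (2 * f x * f' x))) := by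
    refine intervalIntegral.integral_nonneg hab fun x _ ↦ ?_
    linarith [sq_nonneg (f' x + g x * f x)]
  rw [intervalIntegral.integral_add (integrable (by fun_prop)) (integrable (by fun_prop)),
    intervalIntegral.integral_sub (integrable (by fun_prop)) (integrable (by fun_prop)),
    intervalIntegral.integral_const_mul, boundary_term] at square_nonneg
  linarith

lemma wirtinger_of_endpoints_eq_zero_of_lt (hab : a ≤ b) (hk : 0 ≤ k) (hkπ : k * (b - a) < π)
    (hf : ContinuousOn f (Icc a b)) (hff' : ∀ x ∈ Ioo a b, HasDerivAt f (f' x) x)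
    (hf' : ContinuousOn f' (Icc a b)) (hfa : f a = 0) (hfb : f b = 0) :
    k ^ 2 * ∫ x in a..b, f x ^ 2 ≤ ∫ x in a..b, f' x ^ 2 := by
  have riccati : ∀ x ∈ Icc a b, HasDerivAt (fun x ↦ k * tan (k * (x - (a + b) / 2)))
      (k ^ 2 + (k * tan (k * (x - (a + b) / 2))) ^ 2) x := by
    intro x hx
    have hcos : cos (k * (x - (a + b) / 2)) ≠ 0 :=
      (cos_pos_of_mem_Ioo ⟨by nlinarith [hx.1], by nlinarith [hx.2]⟩).ne'
    have hinner := ((hasDerivAt_id x).sub_const ((a + b) / 2)).const_mul k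
    refine (((hasDerivAt_tan hcos).comp x hinner).const_mul k).congr_deriv ?_
    rw [one_div, ← inv_one_add_tan_sq hcos, inv_inv]
    ring
  simpa [hfa, hfb] using mul_integral_sq_le_of_riccati hab riccati hf hff' hf'

lemma wirtinger_of_endpoints_eq_zero (hab : a < b)
    (hf : ContinuousOn f (Icc a b)) (hff' : ∀ x ∈ Ioo a b, HasDerivAt f (f' x) x)
    (hf' : ContinuousOn f' (Icc a b)) (hfa : f a = 0) (hfb : f b = 0) :
    (π / (b - a)) ^ 2 * ∫ x in a..b, f x ^ 2 ≤ ∫ x in a..b, f' x ^ 2 := by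
  have hlen : 0 < b - a := sub_pos.2 hab
  have hlim : Tendsto (fun k : ℝ ↦ k ^ 2 * ∫ x in a..b, f x ^ 2) (𝓝[<] (π / (b - a)))
      (𝓝 ((π / (b - a)) ^ 2 * ∫ x in a..b, f x ^ 2)) :=
    (Continuous.tendsto (by fun_prop) _).mono_left nhdsWithin_le_nhds
  refine le_of_tendsto hlim ?_
  filter_upwards [Ioo_mem_nhdsLT (div_pos pi_pos hlen)] with k hk
  exact wirtinger_of_endpoints_eq_zero_of_lt hab.le hk.1.le ((lt_div_iff₀ hlen).1 hk.2)
    hf hff' hf' hfa hfb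

-- The primitive `F` of `f` vanishes at both endpoints, so `κ² ‖F‖² ≤ ‖f‖²` for `κ = π / (b - a)`;
-- the claim follows on integrating `(f' + κ² F)² = f'² + κ⁴ F² - 2 κ² f² + 2 κ² (f F)'`.
lemma wirtinger_of_integral_eq_zero (hab : a < b)
    (hf : ContinuousOn f (Icc a b)) (hff' : ∀ x ∈ Ioo a b, HasDerivAt f (f' x) x)
    (hf' : ContinuousOn f' (Icc a b)) (hmean : ∫ x in a..b, f x = 0) :
    (π / (b - a)) ^ 2 * ∫ x in a..b, f x ^ 2 ≤ ∫ x in a..b, f' x ^ 2 := by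
  have integrable {φ : ℝ → ℝ} (hφ : ContinuousOn φ (Icc a b)) :
      IntervalIntegrable φ volume a b := hφ.intervalIntegrable_of_Icc hab.le
  set κ := π / (b - a)
  set F : ℝ → ℝ := fun x ↦ ∫ t in a..x, f t
  have hF : ContinuousOn F (Icc a b) := by
    simpa only [uIcc_of_le hab.le] using
      intervalIntegral.continuousOn_primitive_interval' (integrable hf) left_mem_uIcc
  have hFf : ∀ x ∈ Ioo a b, HasDerivAt F (f x) x := fun x hx ↦
    intervalIntegral.integral_hasDerivAt_right
      ((hf.mono (Icc_subset_Icc_right hx.2.le)).intervalIntegrable_of_Icc hx.1.le)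
      ((hf.mono Ioo_subset_Icc_self).stronglyMeasurableAtFilter isOpen_Ioo x hx)
      (hff' x hx).continuousAt
  have hFa : F a = 0 := intervalIntegral.integral_same
  have hFb : F b = 0 := hmean
  have hwirt : κ ^ 2 * ∫ x in a..b, F x ^ 2 ≤ ∫ x in a..b, f x ^ 2 :=
    wirtinger_of_endpoints_eq_zero hab hF hFf hf hFa hFb
  have by_parts : ∫ x in a..b, (f' x * F x + f x * f x) = 0 := by
    rw [intervalIntegral.integral_eq_sub_of_hasDerivAt_of_le hab.le (hf.mul hF)
      (fun x hx ↦ (hff' x hx).mul (hFf x hx)) (integrable (by fun_prop))]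
    simp [hFa, hFb]
  have square_nonneg : 0 ≤ ∫ x in a..b, (f' x ^ 2 + κ ^ 4 * F x ^ 2 +
      (2 * κ ^ 2 * (f' x * F x + f x * f x) - 2 * κ ^ 2 * f x ^ 2)) := by
    refine intervalIntegral.integral_nonneg hab.le fun x _ ↦ ?_
    linarith [sq_nonneg (f' x + κ ^ 2 * F x)]
  rw [intervalIntegral.integral_add (integrable (by fun_prop)) (integrable (by fun_prop)),
    intervalIntegral.integral_add (integrable (by fun_prop)) (integrable (by fun_prop)),
    intervalIntegral.integral_sub (integrable (by fun_prop)) (integrable (by fun_prop)),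
    intervalIntegral.integral_const_mul, intervalIntegral.integral_const_mul,
    intervalIntegral.integral_const_mul, by_parts] at square_nonneg
  linarith [mul_le_mul_of_nonneg_left hwirt (sq_nonneg κ)]

lemma tanh_pos_of_pos {x : ℝ} (hx : 0 < x) : 0 < tanh x := by
  rw [tanh_eq_sinh_div_cosh]
  exact div_pos (sinh_pos_iff.2 hx) (cosh_pos x)

lemma hasDerivAt_tanh (x : ℝ) : HasDerivAt tanh (1 - tanh x ^ 2) x := by
  have hcosh : cosh x ≠ 0 := (cosh_pos x).ne'
  have hquot := (hasDerivAt_sinh x).fun_div (hasDerivAt_cosh x) hcosh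
  simp only [← tanh_eq_sinh_div_cosh] at hquot
  refine hquot.congr_deriv ?_
  rw [tanh_eq_sinh_div_cosh]
  field_simp

lemma mul_tanh_mul_sq_le_integral (hab : a ≤ b) (hf : ContinuousOn f (Icc a b))
    (hff' : ∀ x ∈ Ioo a b, HasDerivAt f (f' x) x) (hf' : ContinuousOn f' (Icc a b)) :
    k * tanh (k * (b - a)) * f a ^ 2 ≤ ∫ x in a..b, (f' x ^ 2 + k ^ 2 * f x ^ 2) := by
  have riccati : ∀ x ∈ Icc a b, HasDerivAt (fun x ↦ k * tanh (k * (b - x)))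
      (-k ^ 2 + (k * tanh (k * (b - x))) ^ 2) x := by
    intro x _
    have hinner := ((hasDerivAt_id x).const_sub b).const_mul k
    exact (((hasDerivAt_tanh _).comp x hinner).const_mul k).congr_deriv (by rw [id]; ring)
  have hriccati := mul_integral_sq_le_of_riccati hab riccati hf hff' hf'
  rw [sub_self, mul_zero, tanh_zero] at hriccati
  rw [intervalIntegral.integral_add, intervalIntegral.integral_const_mul]
  · linarith
  all_goals exact ContinuousOn.intervalIntegrable_of_Icc hab (by fun_prop)

end OneDimensional

lemma integral_sub_average_sq_le {α : Type*} [MeasurableSpace α] {μ : Measure α}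
    [IsFiniteMeasure μ] {f : α → ℝ} (hf : MemLp f 2 μ) :
    ∫ x, (f x - ⨍ y, f y ∂μ) ^ 2 ∂μ ≤ ∫ x, f x ^ 2 ∂μ := by
  set m := ⨍ y, f y ∂μ
  have hdev : MemLp (fun x ↦ f x - m) 2 μ := hf.sub (memLp_const m)
  have hcross : Integrable (fun x ↦ 2 * m * (f x - m)) μ :=
    (hdev.integrable one_le_two).const_mul _
  have hexpand : ∀ x, f x ^ 2 = (f x - m) ^ 2 + 2 * m * (f x - m) + m ^ 2 := fun x ↦ by ring
  simp_rw [hexpand]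
  rw [integral_add (by exact hdev.integrable_sq.add hcross) (integrable_const _),
    integral_add hdev.integrable_sq hcross, integral_const_mul, integral_sub_average]
  have : 0 ≤ ∫ _, m ^ 2 ∂μ := integral_nonneg fun _ ↦ sq_nonneg m
  linarith

lemma intervalIntegral_sub_average_sq_le {f : ℝ → ℝ} {a b : ℝ} (hab : a ≤ b)
    (hf : ContinuousOn f (Icc a b)) :
    ∫ x in a..b, (f x - ⨍ y in a..b, f y) ^ 2 ≤ ∫ x in a..b, f x ^ 2 := by
  simp only [intervalIntegral.integral_of_le hab, uIoc_of_le hab]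
  have hf_Ioc : ContinuousOn f (Ioc a b) := hf.mono Ioc_subset_Icc_self
  refine integral_sub_average_sq_le
    ((memLp_two_iff_integrable_sq (hf_Ioc.aestronglyMeasurable measurableSet_Ioc)).2 ?_)
  exact (hf.pow 2).integrableOn_Icc.mono_set Ioc_subset_Icc_self

section Averages

variable {E : Type*} [NormedAddCommGroup E] [NormedSpace ℝ E] {u u' : ℝ → ℝ → E}

lemma intervalIntegral_sub_average [CompleteSpace E] (f : ℝ → E) (a b : ℝ) :
    ∫ x in a..b, (f x - ⨍ y in a..b, f y) = 0 := by
  rw [intervalIntegral.intervalIntegral_eq_integral_uIoc,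
    setAverage_sub_setAverage (by simp [uIoc]), smul_zero]

lemma hasDerivAt_intervalIntegral_of_continuous_deriv (hu : ∀ x, Continuous (u x))
    (hu' : Continuous (uncurry u')) (huu' : ∀ x y, HasDerivAt (u · y) (u' x y) x) (a b x : ℝ) :
    HasDerivAt (fun s ↦ ∫ y in a..b, u s y) (∫ y in a..b, u' x y) x := by
  obtain ⟨M, hM⟩ := ((isCompact_Icc (a := x - 1) (b := x + 1)).prod
    (isCompact_uIcc (a := a) (b := b))).exists_bound_of_continuousOn hu'.continuousOn
  exact (intervalIntegral.hasDerivAt_integral_of_dominated_loc_of_deriv_le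
    (bound := fun _ ↦ M) (Icc_mem_nhds (sub_one_lt x) (lt_add_one x))
    (.of_forall fun s ↦ (hu s).aestronglyMeasurable) ((hu x).intervalIntegrable _ _)
    (hu'.uncurry_left x).aestronglyMeasurable
    (.of_forall fun y hy s hs ↦ hM (s, y) ⟨hs, uIoc_subset_uIcc hy⟩)
    (continuous_const.intervalIntegrable _ _) (.of_forall fun y _ s _ ↦ huu' s y)).2

lemma continuous_intervalAverage (hu : Continuous (uncurry u)) (a b : ℝ) :
    Continuous fun x ↦ ⨍ y in a..b, u x y := by
  simp only [interval_average_eq]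
  exact (intervalIntegral.continuous_parametric_intervalIntegral_of_continuous' hu a b).const_smul _

lemma hasDerivAt_intervalAverage_of_continuous_deriv (hu : ∀ x, Continuous (u x))
    (hu' : Continuous (uncurry u')) (huu' : ∀ x y, HasDerivAt (u · y) (u' x y) x) (a b x : ℝ) :
    HasDerivAt (fun s ↦ ⨍ y in a..b, u s y) (⨍ y in a..b, u' x y) x := by
  simp only [interval_average_eq]
  exact (hasDerivAt_intervalIntegral_of_continuous_deriv hu hu' huu' a b x).const_smul _

end Averages

section Rectangle

variable {a b c d : ℝ} {u ux uy : ℝ → ℝ → ℝ}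

lemma intervalIntegral_intervalIntegral_add_le_add {p p' q q' : ℝ → ℝ → ℝ} (hab : a ≤ b)
    (hp : Continuous (uncurry p)) (hp' : Continuous (uncurry p'))
    (hq : Continuous (uncurry q)) (hq' : Continuous (uncurry q'))
    (hpp' : ∀ x ∈ Icc a b, ∫ y in c..d, p x y ≤ ∫ y in c..d, p' x y)
    (hqq' : ∀ x ∈ Icc a b, ∫ y in c..d, q x y ≤ ∫ y in c..d, q' x y) :
    ∫ x in a..b, ∫ y in c..d, (p x y + q x y) ≤ ∫ x in a..b, ∫ y in c..d, (p' x y + q' x y) := by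
  have integrable {v w : ℝ → ℝ → ℝ} (hv : Continuous (uncurry v)) (hw : Continuous (uncurry w)) :
      IntervalIntegrable (fun x ↦ ∫ y in c..d, (v x y + w x y)) volume a b :=
    (intervalIntegral.continuous_parametric_intervalIntegral_of_continuous'
      (f := fun x y ↦ v x y + w x y) (hv.add hw) c d).intervalIntegrable a b
  have slice_add {v w : ℝ → ℝ → ℝ} (hv : Continuous (uncurry v)) (hw : Continuous (uncurry w))
      (x : ℝ) : ∫ y in c..d, (v x y + w x y) = (∫ y in c..d, v x y) + ∫ y in c..d, w x y :=
    intervalIntegral.integral_add ((hv.uncurry_left x).intervalIntegrable c d)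
      ((hw.uncurry_left x).intervalIntegrable c d)
  refine intervalIntegral.integral_mono_on hab (integrable hp hq) (integrable hp' hq') fun x hx ↦ ?_
  rw [slice_add hp hq, slice_add hp' hq']
  exact add_le_add (hpp' x hx) (hqq' x hx)

lemma mul_tanh_mul_integral_sq_le_of_slice_integral_eq_zero (hab : a ≤ b) (hcd : c < d)
    (hu : Continuous (uncurry u)) (hux : Continuous (uncurry ux)) (huy : Continuous (uncurry uy))
    (hdx : ∀ x y, HasDerivAt (u · y) (ux x y) x) (hdy : ∀ x y, HasDerivAt (u x) (uy x y) y)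
    (hmean : ∀ x ∈ Icc a b, ∫ y in c..d, u x y = 0) :
    π / (d - c) * tanh (π / (d - c) * (b - a)) * ∫ y in c..d, u a y ^ 2 ≤
      ∫ x in a..b, ∫ y in c..d, (ux x y ^ 2 + uy x y ^ 2) := by
  set κ := π / (d - c)
  have hux_sq : Continuous (uncurry fun x y ↦ ux x y ^ 2) := hux.fun_pow 2
  have hu_sq : Continuous (uncurry fun x y ↦ κ ^ 2 * u x y ^ 2) := (hu.fun_pow 2).const_mul _
  have hsum : Continuous (uncurry fun x y ↦ ux x y ^ 2 + κ ^ 2 * u x y ^ 2) := hux_sq.add hu_sq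
  have hsum_swap : Continuous (uncurry fun y x ↦ ux x y ^ 2 + κ ^ 2 * u x y ^ 2) :=
    hsum.comp continuous_swap
  calc κ * tanh (κ * (b - a)) * ∫ y in c..d, u a y ^ 2
    _ = ∫ y in c..d, κ * tanh (κ * (b - a)) * u a y ^ 2 :=
        (intervalIntegral.integral_const_mul _ _).symm
    _ ≤ ∫ y in c..d, ∫ x in a..b, (ux x y ^ 2 + κ ^ 2 * u x y ^ 2) := by
        refine intervalIntegral.integral_mono_on hcd.le
          ((((hu.uncurry_left a).fun_pow 2).const_mul _).intervalIntegrable _ _)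
          ((intervalIntegral.continuous_parametric_intervalIntegral_of_continuous'
            hsum_swap a b).intervalIntegrable _ _) fun y _ ↦ ?_
        exact mul_tanh_mul_sq_le_integral hab (hu.uncurry_right y).continuousOn
          (fun x _ ↦ hdx x y) (hux.uncurry_right y).continuousOn
    _ = ∫ x in a..b, ∫ y in c..d, (ux x y ^ 2 + κ ^ 2 * u x y ^ 2) := by
        refine (intervalIntegral_intervalIntegral_swap ?_).symm
        exact (hsum.continuousOn.integrableOn_compact
          (isCompact_uIcc.prod isCompact_uIcc)).mono_set
          (prod_mono uIoc_subset_uIcc uIoc_subset_uIcc)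
    _ ≤ ∫ x in a..b, ∫ y in c..d, (ux x y ^ 2 + uy x y ^ 2) := by
        refine intervalIntegral_intervalIntegral_add_le_add hab hux_sq hux_sq hu_sq (huy.fun_pow 2)
          (fun x _ ↦ le_rfl) fun x hx ↦ ?_
        rw [intervalIntegral.integral_const_mul]
        exact wirtinger_of_integral_eq_zero hcd (hu.uncurry_left x).continuousOn
          (fun y _ ↦ hdy x y) (huy.uncurry_left x).continuousOn (hmean x hx)

-- Subtracting from `u` its mean over each slice `{x} × [c, d]` leaves `∂u/∂y` and the trace on
-- `x = a` unchanged, and replaces `∂u/∂x` by its deviation from its own slice mean.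
lemma mul_tanh_mul_integral_sq_le (hab : a ≤ b) (hcd : c < d)
    (hu : Continuous (uncurry u)) (hux : Continuous (uncurry ux)) (huy : Continuous (uncurry uy))
    (hdx : ∀ x y, HasDerivAt (u · y) (ux x y) x) (hdy : ∀ x y, HasDerivAt (u x) (uy x y) y)
    (hmean : ∫ y in c..d, u a y = 0) :
    π / (d - c) * tanh (π / (d - c) * (b - a)) * ∫ y in c..d, u a y ^ 2 ≤
      ∫ x in a..b, ∫ y in c..d, (ux x y ^ 2 + uy x y ^ 2) := by
  have continuous_deviation {v : ℝ → ℝ → ℝ} (hv : Continuous (uncurry v)) :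
      Continuous (uncurry fun x y ↦ v x y - ⨍ t in c..d, v x t) :=
    hv.sub ((continuous_intervalAverage hv c d).comp continuous_fst)
  have hdx_average := hasDerivAt_intervalAverage_of_continuous_deriv hu.uncurry_left hux hdx c d
  have haverage : ⨍ y in c..d, u a y = 0 := by
    rw [interval_average_eq_div, hmean, zero_div]
  have hdeviation := mul_tanh_mul_integral_sq_le_of_slice_integral_eq_zero hab hcd
    (continuous_deviation hu) (continuous_deviation hux) huy
    (fun x y ↦ (hdx x y).sub (hdx_average x)) (fun x y ↦ (hdy x y).sub_const _)
    (fun x _ ↦ intervalIntegral_sub_average (u x) c d)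
  simp only [haverage, sub_zero] at hdeviation
  exact hdeviation.trans <| intervalIntegral_intervalIntegral_add_le_add hab
    ((continuous_deviation hux).fun_pow 2) (hux.fun_pow 2) (huy.fun_pow 2) (huy.fun_pow 2)
    (fun x _ ↦ intervalIntegral_sub_average_sq_le hcd.le (hux.uncurry_left x).continuousOn)
    (fun x _ ↦ le_rfl)

end Rectangle

section EuclideanPlane

lemma norm_gradient_sq_eq_sum {ι E : Type*} [Fintype ι] [NormedAddCommGroup E]
    [InnerProductSpace ℝ E] [CompleteSpace E] (e : OrthonormalBasis ι ℝ E) (w : E → ℝ) (x : E) :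
    ‖gradient w x‖ ^ 2 = ∑ i, fderiv ℝ w x (e i) ^ 2 := by
  simp only [← e.sum_sq_norm_inner_left, inner_gradient_left, norm_eq_abs, sq_abs]

lemma setIntegral_rectangle_eq_intervalIntegral {E : Type*} [NormedAddCommGroup E]
    [NormedSpace ℝ E] {a b c d : ℝ} (hab : a ≤ b) (hcd : c ≤ d)
    {f : EuclideanSpace ℝ (Fin 2) → E} (hf : Continuous f) :
    ∫ p in {p : EuclideanSpace ℝ (Fin 2) | p 0 ∈ Ioo a b ∧ p 1 ∈ Ioo c d}, f p =
      ∫ x in a..b, ∫ y in c..d, f !₂[x, y] := by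
  let e : ℝ × ℝ ≃ᵐ EuclideanSpace ℝ (Fin 2) :=
    MeasurableEquiv.finTwoArrow.symm.trans (MeasurableEquiv.toLp 2 (Fin 2 → ℝ))
  have he : MeasurePreserving e :=
    (PiLp.volume_preserving_toLp (Fin 2)).comp (volume_preserving_finTwoArrow ℝ).symm
  have hpreimage : e ⁻¹' {p | p 0 ∈ Ioo a b ∧ p 1 ∈ Ioo c d} = Ioo a b ×ˢ Ioo c d := by
    ext p
    simp [e, MeasurableEquiv.finTwoArrow]
  have hfe : Continuous fun p : ℝ × ℝ ↦ f !₂[p.1, p.2] := by fun_prop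
  have hintegrable : IntegrableOn (fun p : ℝ × ℝ ↦ f !₂[p.1, p.2]) (Ioo a b ×ˢ Ioo c d) :=
    (hfe.continuousOn.integrableOn_compact (isCompact_Icc.prod isCompact_Icc)).mono_set
      (prod_mono Ioo_subset_Icc_self Ioo_subset_Icc_self)
  rw [← he.setIntegral_preimage_emb e.measurableEmbedding, hpreimage]
  simp only [intervalIntegral.integral_of_le hab, intervalIntegral.integral_of_le hcd,
    integral_Ioc_eq_integral_Ioo]
  exact setIntegral_prod _ hintegrable

lemma hasDerivAt_comp_toLp_update {ι F : Type*} [Finite ι] [DecidableEq ι]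
    [NormedAddCommGroup F] [NormedSpace ℝ F] {w : EuclideanSpace ℝ ι → F}
    {p : ι → ℝ} {i : ι} {x : ℝ} (hw : DifferentiableAt ℝ w (WithLp.toLp 2 (update p i x))) :
    HasDerivAt (fun s ↦ w (WithLp.toLp 2 (update p i s)))
      (fderiv ℝ w (WithLp.toLp 2 (update p i x)) (EuclideanSpace.single i 1)) x := by
  have := Fintype.ofFinite ι
  have hline : HasDerivAt (fun s ↦ WithLp.toLp 2 (update p i s))
      (EuclideanSpace.single i (1 : ℝ)) x :=
    (PiLp.hasFDerivAt_toLp (𝕜 := ℝ) (E := fun _ : ι ↦ ℝ) 2 (update p i x)).comp_hasDerivAt x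
      (hasDerivAt_update p i x)
  exact hw.hasFDerivAt.comp_hasDerivAt x hline

lemma hasDerivAt_slice_zero {F : Type*} [NormedAddCommGroup F] [NormedSpace ℝ F]
    {w : EuclideanSpace ℝ (Fin 2) → F} (hw : Differentiable ℝ w) (x y : ℝ) :
    HasDerivAt (fun s ↦ w !₂[s, y]) (fderiv ℝ w !₂[x, y] (EuclideanSpace.single 0 1)) x := by
  have hupdate (s : ℝ) : update ![x, y] 0 s = ![s, y] := by ext i; fin_cases i <;> rfl
  simpa only [hupdate] using hasDerivAt_comp_toLp_update (p := ![x, y]) (i := 0) (x := x) (hw _)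

lemma hasDerivAt_slice_one {F : Type*} [NormedAddCommGroup F] [NormedSpace ℝ F]
    {w : EuclideanSpace ℝ (Fin 2) → F} (hw : Differentiable ℝ w) (x y : ℝ) :
    HasDerivAt (fun s ↦ w !₂[x, s]) (fderiv ℝ w !₂[x, y] (EuclideanSpace.single 1 1)) y := by
  have hupdate (s : ℝ) : update ![x, y] 1 s = ![x, s] := by ext i; fin_cases i <;> rfl
  simpa only [hupdate] using hasDerivAt_comp_toLp_update (p := ![x, y]) (i := 1) (x := y) (hw _)

variable {w : EuclideanSpace ℝ (Fin 2) → ℝ}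

lemma setIntegral_norm_gradient_sq {a b c d : ℝ} (hab : a ≤ b) (hcd : c ≤ d)
    (hw : ContDiff ℝ 1 w) :
    ∫ p in {p : EuclideanSpace ℝ (Fin 2) | p 0 ∈ Ioo a b ∧ p 1 ∈ Ioo c d}, ‖gradient w p‖ ^ 2 =
      ∫ x in a..b, ∫ y in c..d, (fderiv ℝ w !₂[x, y] (EuclideanSpace.single 0 1) ^ 2 +
        fderiv ℝ w !₂[x, y] (EuclideanSpace.single 1 1) ^ 2) := by
  have hgradient : Continuous (gradient w) :=
    (InnerProductSpace.toDual ℝ _).symm.continuous.comp (hw.continuous_fderiv one_ne_zero)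
  rw [setIntegral_rectangle_eq_intervalIntegral hab hcd (hgradient.norm.fun_pow 2)]
  simp only [norm_gradient_sq_eq_sum (EuclideanSpace.basisFun (Fin 2) ℝ), Fin.sum_univ_two,
    EuclideanSpace.basisFun_apply]

lemma mul_tanh_mul_integral_trace_sq_le_integral_norm_gradient_sq {a b c d : ℝ} (hab : a ≤ b)
    (hcd : c < d) (hw : ContDiff ℝ 1 w) (hmean : ∫ y in c..d, w !₂[a, y] = 0) :
    π / (d - c) * tanh (π / (d - c) * (b - a)) * ∫ y in c..d, w !₂[a, y] ^ 2 ≤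
      ∫ p in {p : EuclideanSpace ℝ (Fin 2) | p 0 ∈ Ioo a b ∧ p 1 ∈ Ioo c d},
        ‖gradient w p‖ ^ 2 := by
  have hw_diff : Differentiable ℝ w := hw.differentiable one_ne_zero
  have hvec : Continuous fun p : ℝ × ℝ ↦ !₂[p.1, p.2] := by fun_prop
  have hpartial (v : EuclideanSpace ℝ (Fin 2)) :
      Continuous (uncurry fun x y ↦ fderiv ℝ w !₂[x, y] v) :=
    ((hw.continuous_fderiv one_ne_zero).comp hvec).clm_apply continuous_const
  rw [setIntegral_norm_gradient_sq hab hcd.le hw]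
  exact mul_tanh_mul_integral_sq_le (u := fun x y ↦ w !₂[x, y]) hab hcd (hw.continuous.comp hvec)
    (hpartial _) (hpartial _) (hasDerivAt_slice_zero hw_diff) (hasDerivAt_slice_one hw_diff) hmean

end EuclideanPlane

section Extremal

lemma integral_cos_mul_eq_zero {k L : ℝ} (hk : k ≠ 0) (hkL : sin (k * L) = 0) :
    ∫ y in (0 : ℝ)..L, cos (k * y) = 0 := by
  rw [intervalIntegral.integral_comp_mul_left cos hk, integral_cos]
  simp [hkL]

lemma integral_cos_mul_sq {k L : ℝ} (hk : k ≠ 0) (hkL : sin (k * L) = 0) :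
    ∫ y in (0 : ℝ)..L, cos (k * y) ^ 2 = L / 2 := by
  rw [intervalIntegral.integral_comp_mul_left (cos · ^ 2) hk, integral_cos_sq]
  simp only [hkL, mul_zero, sin_zero, smul_eq_mul]
  field_simp
  ring

lemma integral_sin_mul_sq {k L : ℝ} (hk : k ≠ 0) (hkL : sin (k * L) = 0) :
    ∫ y in (0 : ℝ)..L, sin (k * y) ^ 2 = L / 2 := by
  rw [intervalIntegral.integral_comp_mul_left (sin · ^ 2) hk, integral_sin_sq]
  simp only [hkL, mul_zero, sin_zero, smul_eq_mul]
  field_simp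
  ring

lemma mul_integral_sinh_sq_add_cosh_sq (k h : ℝ) :
    k * ∫ x in (0 : ℝ)..h, (sinh (k * (h - x)) ^ 2 + cosh (k * (h - x)) ^ 2) =
      sinh (k * h) * cosh (k * h) := by
  rw [← intervalIntegral.integral_const_mul,
    intervalIntegral.integral_eq_sub_of_hasDerivAt
      (f := fun x ↦ -(sinh (k * (h - x)) * cosh (k * (h - x))))]
  · simp
  · intro x _
    have hinner := ((hasDerivAt_id x).const_sub h).const_mul k
    exact (hinner.sinh.mul hinner.cosh).neg.congr_deriv (by simp only [id]; ring)
  · exact Continuous.intervalIntegrable (by fun_prop) _ _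

/-- The harmonic function `cos (k y) cosh (k (h - x))` of the plane, written as a function of the
point `p = (x, y)`. Its normal derivative vanishes on the side `x = h`, and on the sides `y = 0` and
`y = L` when `sin (k L) = 0`; for `k = π / L` it attains the sharp constant of the trace inequality
on `(0, h) × (0, L)`. -/
noncomputable def cosCosh (k h : ℝ) (p : EuclideanSpace ℝ (Fin 2)) : ℝ :=
  cos (k * p 1) * cosh (k * (h - p 0))

namespace cosCosh

variable {k h L : ℝ}

lemma contDiff : ContDiff ℝ 1 (cosCosh k h) := by
  unfold cosCosh
  fun_prop

lemma fderiv_single_zero (x y : ℝ) :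
    fderiv ℝ (cosCosh k h) !₂[x, y] (EuclideanSpace.single 0 1) =
      -k * cos (k * y) * sinh (k * (h - x)) := by
  refine (hasDerivAt_slice_zero (contDiff.differentiable one_ne_zero) x y).unique ?_
  have hinner := ((hasDerivAt_id x).const_sub h).const_mul k
  exact (hinner.cosh.const_mul (cos (k * y))).congr_deriv (by simp only [id]; ring)

lemma fderiv_single_one (x y : ℝ) :
    fderiv ℝ (cosCosh k h) !₂[x, y] (EuclideanSpace.single 1 1) =
      -k * sin (k * y) * cosh (k * (h - x)) := by
  refine (hasDerivAt_slice_one (contDiff.differentiable one_ne_zero) x y).unique ?_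
  have hinner := (hasDerivAt_id y).const_mul k
  exact (hinner.cos.mul_const (cosh (k * (h - x)))).congr_deriv (by simp only [id]; ring)

lemma integral_trace_eq_zero (hk : k ≠ 0) (hkL : sin (k * L) = 0) :
    ∫ y in (0 : ℝ)..L, cosCosh k h !₂[0, y] = 0 := by
  simp [cosCosh, integral_cos_mul_eq_zero hk hkL]

lemma integral_trace_sq (hk : k ≠ 0) (hkL : sin (k * L) = 0) :
    ∫ y in (0 : ℝ)..L, cosCosh k h !₂[0, y] ^ 2 = L / 2 * cosh (k * h) ^ 2 := by
  simp [cosCosh, mul_pow, integral_cos_mul_sq hk hkL]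

lemma integral_slice_energy (hk : k ≠ 0) (hkL : sin (k * L) = 0) (x : ℝ) :
    ∫ y in (0 : ℝ)..L, ((-k * cos (k * y) * sinh (k * (h - x))) ^ 2 +
        (-k * sin (k * y) * cosh (k * (h - x))) ^ 2) =
      L / 2 * k * (k * (sinh (k * (h - x)) ^ 2 + cosh (k * (h - x)) ^ 2)) := by
  simp only [mul_pow]
  rw [intervalIntegral.integral_add, intervalIntegral.integral_mul_const,
    intervalIntegral.integral_mul_const, intervalIntegral.integral_const_mul,
    intervalIntegral.integral_const_mul, integral_cos_mul_sq hk hkL, integral_sin_mul_sq hk hkL]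
  · ring
  all_goals exact Continuous.intervalIntegrable (by fun_prop) _ _

lemma integral_norm_gradient_sq (hh : 0 ≤ h) (hL : 0 ≤ L) (hk : k ≠ 0) (hkL : sin (k * L) = 0) :
    ∫ p in {p : EuclideanSpace ℝ (Fin 2) | p 0 ∈ Ioo 0 h ∧ p 1 ∈ Ioo 0 L},
        ‖gradient (cosCosh k h) p‖ ^ 2 =
      k * tanh (k * h) * ∫ y in (0 : ℝ)..L, cosCosh k h !₂[0, y] ^ 2 := by
  rw [setIntegral_norm_gradient_sq hh hL contDiff]
  simp only [fderiv_single_zero, fderiv_single_one, integral_slice_energy hk hkL]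
  rw [intervalIntegral.integral_const_mul, intervalIntegral.integral_const_mul,
    mul_integral_sinh_sq_add_cosh_sq, integral_trace_sq hk hkL, tanh_eq_sinh_div_cosh]
  have hcosh : cosh (k * h) ≠ 0 := (cosh_pos _).ne'
  field_simp

end cosCosh

end Extremal

lemma sqrt_le_one_div_sqrt_mul_sqrt {A T E : ℝ} (hA : 0 < A) (h : A * T ≤ E) :
    √T ≤ 1 / √A * √E := by
  rw [one_div_mul_eq_div, le_div_iff₀ (sqrt_pos.2 hA), mul_comm, ← sqrt_mul hA.le]
  exact sqrt_le_sqrt h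

lemma one_div_sqrt_le_of_sqrt_le_mul_sqrt {A T C : ℝ} (hA : 0 < A) (hT : 0 < T)
    (h : √T ≤ C * √(A * T)) : 1 / √A ≤ C := by
  rw [sqrt_mul hA.le, ← mul_assoc] at h
  rw [div_le_iff₀ (sqrt_pos.2 hA)]
  exact (le_mul_iff_one_le_left (sqrt_pos.2 hT)).1 h

/-- The sharp constant `C₂(Ω,Γ)` in the inequality
`‖w‖_{L²(Γ)} ≤ C₂ ‖∇w‖_{L²(Ω)}` for functions with zero mean trace on `Γ`,
where `Ω = (0,h₁) × (0,h₂)` and `Γ = {0} × [0,h₂]` is one side of the rectangle,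
equals `((π/h₂)·tanh(π h₁/h₂))^(-1/2)`. -/
theorem rectangle_one_side_C2 (h₁ h₂ : ℝ) (hh₁ : 0 < h₁) (hh₂ : 0 < h₂) :
    IsLeast {C : ℝ |
      ∀ w : EuclideanSpace ℝ (Fin 2) → ℝ, ContDiff ℝ 1 w →
        (∫ t in (0:ℝ)..h₂, w !₂[0, t]) = 0 →
        Real.sqrt (∫ t in (0:ℝ)..h₂, (w !₂[0, t]) ^ 2) ≤
          C * Real.sqrt (∫ x in {x : EuclideanSpace ℝ (Fin 2) |
            x 0 ∈ Set.Ioo 0 h₁ ∧ x 1 ∈ Set.Ioo 0 h₂}, ‖gradient w x‖ ^ 2)}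
      (1 / Real.sqrt ((π / h₂) * Real.tanh (π * h₁ / h₂))) := by
  have hk : 0 < π / h₂ := div_pos pi_pos hh₂
  have hsin : sin (π / h₂ * h₂) = 0 := by rw [div_mul_cancel₀ _ hh₂.ne', sin_pi]
  rw [mul_div_right_comm]
  have hconst : 0 < π / h₂ * tanh (π / h₂ * h₁) := mul_pos hk (tanh_pos_of_pos (mul_pos hk hh₁))
  constructor
  · intro w hw hmean
    refine sqrt_le_one_div_sqrt_mul_sqrt hconst ?_
    simpa only [sub_zero] using
      mul_tanh_mul_integral_trace_sq_le_integral_norm_gradient_sq hh₁.le hh₂ hw hmean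
  · intro C hC
    have htrace : 0 < ∫ y in (0 : ℝ)..h₂, cosCosh (π / h₂) h₁ !₂[0, y] ^ 2 := by
      rw [cosCosh.integral_trace_sq hk.ne' hsin]
      have := cosh_pos (π / h₂ * h₁)
      positivity
    refine one_div_sqrt_le_of_sqrt_le_mul_sqrt hconst htrace ?_
    rw [← cosCosh.integral_norm_gradient_sq hh₁.le hh₂.le hk.ne' hsin]
    exact hC _ cosCosh.contDiff (cosCosh.integral_trace_eq_zero hk.ne' hsin)
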